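/- Fix real numbers a, b, c. The cubic function V(m) = 1 + a·m + b·m² + c·m³ belongs to the class 𝒱 (i.e., it is the variance function of a CSK family generated by some non-degenerate compactly supported probability measure on ℝ with mean 0 and variance 1) if and only if (b+1)³ ≥ 27c². -/

import Mathlib

open MeasureTheory Filter

noncomputable section

/-- The Cauchy–Stieltjes kernel density `f(x,m) = V(m)/(V(m)+m(m-x))`. -/
def cskKernel (V : ℝ → ℝ) (m x : ℝ) : ℝ := V m / (V m + m * (m - x))

/-- `ν` is a non-degenerate, compactly supported probability measure on `ℝ` with mean `0`. -/
def IsCSKGenerator (ν : Measure ℝ) : Prop :=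
  IsProbabilityMeasure ν ∧
  (∃ R : ℝ, ν (Set.Icc (-R) R)ᶜ = 0) ∧
  (∀ a : ℝ, ν ≠ Measure.dirac a) ∧
  (∫ x, x ∂ν) = 0

/-- `V` is the variance function of the CSK family generated by `ν`:
`V` is real-analytic near `0`, `V 0 > 0`, and for all `m` near `0` the kernel
`f(x,m)` is a.e. nonnegative, integrates to `1`, and has mean `m`. -/
def IsCSKVarianceFun (ν : Measure ℝ) (V : ℝ → ℝ) : Prop :=
  AnalyticAt ℝ V 0 ∧ 0 < V 0 ∧
  ∃ ε > 0, ∀ m : ℝ, |m| < ε →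
    (∀ᵐ x ∂ν, 0 ≤ cskKernel V m x) ∧
    (∫ x, cskKernel V m x ∂ν) = 1 ∧
    (∫ x, x * cskKernel V m x ∂ν) = m

/-- The class `𝒱` of variance functions of CSK families generated by
non-degenerate compactly supported probability measures with mean `0` and variance `1`. -/
def memV (V : ℝ → ℝ) : Prop :=
  ∃ ν : Measure ℝ, IsCSKGenerator ν ∧ (∫ x, x ^ 2 ∂ν) = 1 ∧ IsCSKVarianceFun ν V

/-- The class `𝒱∞`: those `V` such that `m ↦ V (c * m)` is in `𝒱` for every real `c`. -/
def memVinf (V : ℝ → ℝ) : Prop := ∀ c : ℝ, memV (fun m => V (c * m))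


lemma spectral_measure {E : Type*} [NormedAddCommGroup E] [InnerProductSpace ℂ E] [CompleteSpace E]
    (T : E →L[ℂ] E) (hT : IsSelfAdjoint T) (Ω : E) (hΩ : ‖Ω‖ = 1) :
    ∃ ν : Measure ℝ, IsProbabilityMeasure ν ∧ ν (spectrum ℝ T)ᶜ = 0 ∧
      ∀ f : ℝ → ℝ, ContinuousOn f (spectrum ℝ T) →
        ∫ x, f x ∂ν = (inner ℂ Ω (cfc f T Ω)).re := by
  have hK : IsCompact (spectrum ℝ T) := spectrum.isCompact T
  have : CompactSpace (spectrum ℝ T) := isCompact_iff_compactSpace.mp hK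
  let L : C(spectrum ℝ T, ℝ) → ℝ := fun g => (inner ℂ Ω (cfcHom hT g Ω)).re
  have hpos : ∀ g : C(spectrum ℝ T, ℝ), 0 ≤ g → 0 ≤ L g := by
    intro g hg
    let r : C(spectrum ℝ T, ℝ) := ⟨fun x => Real.sqrt (g x), by fun_prop⟩
    have hr : g = star r * r := by
      ext x
      have h0 : 0 ≤ g x := hg x
      simp [r, Real.mul_self_sqrt h0]
    have : cfcHom hT g = star (cfcHom hT r) * cfcHom hT r := by
      rw [hr]; simp only [map_mul, map_star]
    simp only [L, this]
    rw [mul_apply_eq_comp, ContinuousLinearMap.star_eq_adjoint,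
      ContinuousLinearMap.adjoint_inner_right]
    exact inner_self_nonneg (𝕜 := ℂ)
  have hadd : ∀ g g', L (g + g') = L g + L g' := by
    intro g g'
    simp [L]
  let Λ : CompactlySupportedContinuousMap (spectrum ℝ T) ℝ →ₚ[ℝ] ℝ :=
  { toFun g := L g.toContinuousMap
    map_add' g g' := hadd _ _
    map_smul' c g := by
      have : (c • g).toContinuousMap = c • g.toContinuousMap := rfl
      simp only [L, this, map_smul]
      simp
    monotone' g g' hgg' := by
      have h1 : g'.toContinuousMap = (g'.toContinuousMap - g.toContinuousMap) + g.toContinuousMap := by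
        simp
      have h2 := hpos (g'.toContinuousMap - g.toContinuousMap) (fun x => sub_nonneg.2 (hgg' x))
      show L g.toContinuousMap ≤ L g'.toContinuousMap
      rw [h1, hadd]
      linarith }
  have key : ∀ g : C(spectrum ℝ T, ℝ), ∫ x, g x ∂(RealRMK.rieszMeasure Λ) = L g := by
    intro g
    exact RealRMK.integral_rieszMeasure Λ ⟨g, HasCompactSupport.of_compactSpace _⟩
  have key2 : ∀ f : ℝ → ℝ, ContinuousOn f (spectrum ℝ T) →
      ∫ x, f x ∂((RealRMK.rieszMeasure Λ).map Subtype.val)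
        = (inner ℂ Ω (cfc f T Ω)).re := by
    intro f hf
    rw [(MeasurableEmbedding.subtype_coe hK.measurableSet).integral_map]
    rw [cfc_apply f T hT hf]
    exact key ⟨_, hf.domRestrict⟩
  refine ⟨(RealRMK.rieszMeasure Λ).map Subtype.val, ⟨?_⟩, ?_, key2⟩
  · have h := key2 (fun _ => 1) continuousOn_const
    rw [cfc_const_one ℝ T] at h
    simp [hΩ] at h
    have h3 : ((RealRMK.rieszMeasure Λ).map (Subtype.val : spectrum ℝ T → ℝ)).real Set.univ = 1 := by
      simpa using h
    rw [Measure.real, ENNReal.toReal_eq_one_iff] at h3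
    exact h3
  · rw [Measure.map_apply (by fun_prop) hK.measurableSet.compl]
    simp

lemma strip_operator {F : Type*} [NormedAddCommGroup F] [InnerProductSpace ℂ F] [CompleteSpace F]
    (M : F →L[ℂ] F) (hM : ∀ x y : F, inner ℂ (M x) y = inner ℂ x (M y)) (e : F) (he : ‖e‖ = 1) :
    ∃ ν : Measure ℝ, ∃ R : ℝ, 0 ≤ R ∧ IsProbabilityMeasure ν ∧ ν (Set.Icc (-R) R)ᶜ = 0 ∧
      (∫ x, x ∂ν) = 0 ∧ (∫ x, x ^ 2 ∂ν) = 1 ∧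
      ∀ (z g : ℝ) (h : F), R < |z| → (z : ℂ) • h - M h = e → inner ℂ e h = (g : ℂ) → z - g ≠ 0 →
        ∫ x, 1 / (z - x) ∂ν = 1 / (z - g) := by
  have hext : ∀ v w : (WithLp 2 (ℂ × F)), v.fst = w.fst → v.snd = w.snd → v = w := by
    intro v w h1 h2
    exact WithLp.ofLp_injective 2 (Prod.ext h1 h2)
  let T : (WithLp 2 (ℂ × F)) →L[ℂ] (WithLp 2 (ℂ × F)) := LinearMap.mkContinuous
    { toFun := fun v => WithLp.toLp 2 (inner ℂ e v.snd, v.fst • e + M v.snd)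
      map_add' := by
        intro v w
        refine hext _ _ ?_ ?_
        · simp
        · simp [add_smul]; abel
      map_smul' := by
        intro k v
        refine hext _ _ ?_ ?_
        · simp
        · simp [mul_smul] } (2 + ‖M‖) (by
      intro v
      have h1 : ‖v.fst‖ ≤ ‖v‖ := WithLp.norm_fst_le _ v
      have h2 : ‖v.snd‖ ≤ ‖v‖ := WithLp.norm_snd_le _ v
      have h3 : (WithLp.toLp 2 (inner ℂ e v.snd, v.fst • e + M v.snd) : (WithLp 2 (ℂ × F))) =
        WithLp.toLp 2 (inner ℂ e v.snd, (0:F)) + WithLp.toLp 2 ((0:ℂ), v.fst • e + M v.snd) := by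
        refine hext _ _ ?_ ?_ <;> simp
      have h4 : ‖(inner ℂ e v.snd : ℂ)‖ ≤ ‖v‖ := by
        have := norm_inner_le_norm (𝕜 := ℂ) e v.snd
        rw [he] at this; linarith
      have h5 : ‖v.fst • e + M v.snd‖ ≤ ‖v‖ + ‖M‖ * ‖v‖ := by
        refine (norm_add_le _ _).trans (add_le_add ?_ ?_)
        · rw [norm_smul, he]; linarith
        · exact (M.le_opNorm _).trans (by gcongr)
      show ‖(WithLp.toLp 2 (inner ℂ e v.snd, v.fst • e + M v.snd) : (WithLp 2 (ℂ × F)))‖ ≤ _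
      rw [h3]
      refine (norm_add_le _ _).trans ?_
      rw [WithLp.norm_toLp_fst, WithLp.norm_toLp_snd]
      linarith)
  have hTf : ∀ v : (WithLp 2 (ℂ × F)), (T v).fst = inner ℂ e v.snd := fun v => rfl
  have hTs : ∀ v : (WithLp 2 (ℂ × F)), (T v).snd = v.fst • e + M v.snd := fun v => rfl
  have hT : IsSelfAdjoint T := by
    rw [ContinuousLinearMap.isSelfAdjoint_iff_isSymmetric]
    intro v w
    show inner ℂ (T v) w = inner ℂ v (T w)
    rw [WithLp.prod_inner_apply, WithLp.prod_inner_apply]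
    have a1 : (WithLp.ofLp (T v)).1 = inner ℂ e v.snd := rfl
    have a2 : (WithLp.ofLp (T v)).2 = v.fst • e + M v.snd := rfl
    have a3 : (WithLp.ofLp (T w)).1 = inner ℂ e w.snd := rfl
    have a4 : (WithLp.ofLp (T w)).2 = w.fst • e + M w.snd := rfl
    rw [a1, a2, a3, a4]
    simp only [inner_add_left, inner_add_right, inner_smul_left, inner_smul_right, hM]
    simp
    ring
  let Ω : (WithLp 2 (ℂ × F)) := WithLp.toLp 2 ((1:ℂ), (0:F))
  have hΩ : ‖Ω‖ = 1 := by
    simp only [Ω]; rw [WithLp.norm_toLp_fst]; simp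
  obtain ⟨ν, hν, hs, hf⟩ := spectral_measure T hT Ω hΩ
  have hspec : spectrum ℝ T ⊆ Set.Icc (-‖T‖) ‖T‖ := by
    have : Nontrivial (WithLp 2 (ℂ × F)) := ⟨Ω, 0, by intro h; rw [h] at hΩ; simp at hΩ⟩
    intro x hx
    have := spectrum.norm_le_norm_of_mem hx
    rw [Real.norm_eq_abs, abs_le] at this
    exact this
  refine ⟨ν, ‖T‖, norm_nonneg _, hν, ?_, ?_, ?_, ?_⟩
  · exact measure_mono_null (Set.compl_subset_compl.2 hspec) hs
  · rw [hf (fun x => x) continuousOn_id, cfc_id' ℝ T hT]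
    rw [WithLp.prod_inner_apply]
    have a1 : (WithLp.ofLp (T Ω)).1 = inner ℂ e (0:F) := rfl
    rw [a1]
    simp [Ω]
  · rw [hf (fun x => x ^ 2) (by fun_prop), cfc_pow_id (R := ℝ) T 2 hT, pow_two, mul_apply_eq_comp]
    have : inner ℂ Ω (T (T Ω)) = inner ℂ (T Ω) (T Ω) := by
      rw [← ContinuousLinearMap.adjoint_inner_left, ← ContinuousLinearMap.star_eq_adjoint, hT.star_eq]
    rw [this, WithLp.prod_inner_apply]
    have a1 : (WithLp.ofLp (T Ω)).1 = inner ℂ e (0:F) := rfl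
    have a2 : (WithLp.ofLp (T Ω)).2 = (1:ℂ) • e + M 0 := rfl
    rw [a1, a2]
    simp [he]
  · intro z g h hz hh hg hzg
    have hne : ∀ x ∈ spectrum ℝ T, z - x ≠ 0 := by
      intro x hx h0
      have h1 : z = x := by linarith
      have h2 := hspec hx
      rw [← h1, ← Set.mem_Icc.symm.eq] at h2
      have := abs_le.2 h2
      linarith
    have hc : ContinuousOn (fun x : ℝ => 1 / (z - x)) (spectrum ℝ T) :=
      ContinuousOn.div (by fun_prop) (by fun_prop) hne
    rw [hf _ hc]
    have hzgC : (z : ℂ) - g ≠ 0 := by exact_mod_cast hzg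
    let ψ : (WithLp 2 (ℂ × F)) := WithLp.toLp 2 (((z : ℂ) - g)⁻¹, ((z : ℂ) - g)⁻¹ • h)
    have hψ : (cfc (fun x : ℝ => z - x) T) ψ = Ω := by
      have : cfc (fun x : ℝ => z - x) T = algebraMap ℝ _ z - T := by
        rw [cfc_sub (fun _ => z) (fun x => x) T, cfc_const z T, cfc_id' ℝ T]
      rw [this]
      have h2 : (algebraMap ℝ ((WithLp 2 (ℂ × F)) →L[ℂ] (WithLp 2 (ℂ × F))) z - T) ψ = (z : ℂ) • ψ - T ψ := by
        simp [Algebra.algebraMap_eq_smul_one]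
      rw [h2]
      refine hext _ _ ?_ ?_
      · have a1 : (T ψ).fst = inner ℂ e (((z : ℂ) - g)⁻¹ • h) := rfl
        simp only [WithLp.sub_fst, WithLp.smul_fst, a1, inner_smul_right, hg]
        simp only [ψ, Ω]
        simp
        field_simp
      · have a1 : (T ψ).snd = ((z : ℂ) - g)⁻¹ • e + M (((z : ℂ) - g)⁻¹ • h) := rfl
        simp only [WithLp.sub_snd, WithLp.smul_snd, a1, map_smul]
        have b1 : ψ.snd = ((z : ℂ) - g)⁻¹ • h := rfl
        have b2 : Ω.snd = 0 := rfl
        rw [b1, b2, ← hh, smul_sub, smul_comm (z : ℂ)]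
        abel
    have h3 : cfc (fun x : ℝ => 1 / (z - x)) T * cfc (fun x : ℝ => z - x) T = 1 := by
      rw [← cfc_mul (fun x : ℝ => 1 / (z - x)) (fun x : ℝ => z - x) T hc (by fun_prop)]
      rw [← cfc_const_one ℝ T]
      apply cfc_congr
      intro x hx
      have := hne x hx
      simp only
      field_simp
    have h4 : cfc (fun x : ℝ => 1 / (z - x)) T Ω = ψ := by
      rw [← hψ, ← mul_apply_eq_comp, h3]; simp
    have hval : inner ℂ Ω ψ = (((z - g)⁻¹ : ℝ) : ℂ) := by
      rw [WithLp.prod_inner_apply]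
      simp [Ω, ψ]
    rw [h4, hval, Complex.ofReal_re, one_div]

lemma strip_measure (μ : Measure ℝ) [IsProbabilityMeasure μ] (S : ℝ)
    (hS : μ (Set.Icc (-S) S)ᶜ = 0) :
    ∃ ν : Measure ℝ, ∃ R : ℝ, 0 ≤ R ∧ IsProbabilityMeasure ν ∧ ν (Set.Icc (-R) R)ᶜ = 0 ∧
      (∫ x, x ∂ν) = 0 ∧ (∫ x, x ^ 2 ∂ν) = 1 ∧
      ∀ z : ℝ, R < |z| → z - (∫ x, 1 / (z - x) ∂μ) ≠ 0 →
        ∫ x, 1 / (z - x) ∂ν = 1 / (z - ∫ x, 1 / (z - x) ∂μ) := by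
  have hae : ∀ᵐ x ∂μ, x ∈ Set.Icc (-S) S := by
    rw [ae_iff]; exact hS
  have hX : MemLp (fun x : ℝ => (x : ℂ)) ⊤ μ := by
    refine memLp_top_of_bound (by fun_prop) S ?_
    filter_upwards [hae] with x hx
    rw [Complex.norm_real, Real.norm_eq_abs]
    exact abs_le.2 hx
  let M : Lp ℂ 2 μ →L[ℂ] Lp ℂ 2 μ :=
    (ContinuousLinearMap.mul ℂ ℂ).holderL μ ⊤ 2 2 (hX.toLp _)
  have hMc : ∀ h : Lp ℂ 2 μ, M h =ᵐ[μ] fun x => (x : ℂ) * h x := by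
    intro h
    have h1 := (ContinuousLinearMap.mul ℂ ℂ).coeFn_holder (r := 2) (hX.toLp _) h
    have h2 := hX.coeFn_toLp
    have h3 : M h = (ContinuousLinearMap.mul ℂ ℂ).holder 2 (hX.toLp _) h := rfl
    rw [h3]
    filter_upwards [h1, h2] with x h1 h2
    rw [h1, h2]; rfl
  have h1mem : MemLp (fun _ : ℝ => (1 : ℂ)) 2 μ := memLp_const 1
  let e : Lp ℂ 2 μ := h1mem.toLp _
  have hec : e =ᵐ[μ] fun _ => (1 : ℂ) := h1mem.coeFn_toLp
  have he : ‖e‖ = 1 := by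
    have : ‖e‖ ^ 2 = 1 := by
      rw [← @inner_self_eq_norm_sq ℂ, L2.inner_def]
      have : ∫ a, inner ℂ (e a) (e a) ∂μ = ∫ a, (1 : ℂ) ∂μ := by
        apply integral_congr_ae
        filter_upwards [hec] with x hx
        rw [hx]; simp
      rw [this]; simp
    nlinarith [norm_nonneg e]
  have hM : ∀ x y : Lp ℂ 2 μ, inner ℂ (M x) y = inner ℂ x (M y) := by
    intro f g
    rw [L2.inner_def, L2.inner_def]
    apply integral_congr_ae
    filter_upwards [hMc f, hMc g] with x h1 h2
    rw [h1, h2]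
    simp
    ring
  obtain ⟨ν, R, hR, hν, hsupp, hm, hv, hG⟩ := strip_operator M hM e he
  refine ⟨ν, max R S, le_max_of_le_left hR, hν, ?_, hm, hv, ?_⟩
  · refine measure_mono_null (Set.compl_subset_compl.2 (Set.Icc_subset_Icc ?_ ?_)) hsupp
    · exact neg_le_neg (le_max_left _ _)
    · exact le_max_left _ _
  · intro z hz hne
    have hzR : R < |z| := lt_of_le_of_lt (le_max_left _ _) hz
    have hzS : S < |z| := lt_of_le_of_lt (le_max_right _ _) hz
    have hlow : ∀ x ∈ Set.Icc (-S) S, |z| - S ≤ |z - x| := by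
      intro x hx
      have h1 := abs_sub_abs_le_abs_sub z x
      have h2 := abs_le.2 hx
      linarith
    have hhm : MemLp (fun x : ℝ => ((1 / (z - x) : ℝ) : ℂ)) 2 μ := by
      have : MemLp (fun x : ℝ => ((1 / (z - x) : ℝ) : ℂ)) ⊤ μ := by
        refine memLp_top_of_bound
          (Complex.measurable_ofReal.comp (by fun_prop)).aestronglyMeasurable (1 / (|z| - S)) ?_
        filter_upwards [hae] with x hx
        rw [Complex.norm_real, Real.norm_eq_abs, abs_div, abs_one]
        exact one_div_le_one_div_of_le (by linarith) (hlow x hx)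
      exact this.mono_exponent le_top
    have hhc := hhm.coeFn_toLp
    refine hG z _ (hhm.toLp _) hzR ?_ ?_ hne
    · apply Lp.ext
      refine (Lp.coeFn_sub _ _).trans ?_
      filter_upwards [Lp.coeFn_smul (z : ℂ) (hhm.toLp _), hMc (hhm.toLp _), hhc, hec, hae]
        with x h1 h2 h3 h4 h5
      rw [Pi.sub_apply, h1, h2, h4, Pi.smul_apply, h3]
      have : z - x ≠ 0 := by
        intro h0
        have := hlow x h5
        rw [h0] at this; simp at this; linarith
      have h6 : (z : ℂ) - x ≠ 0 := by exact_mod_cast this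
      push_cast
      rw [smul_eq_mul, ← sub_mul]
      field_simp
    · rw [L2.inner_def, ← integral_complex_ofReal]
      apply integral_congr_ae
      filter_upwards [hhc, hec] with x h1 h2
      rw [h1, h2]
      simp

lemma memV_of_measure (a b c : ℝ) (μ : Measure ℝ) [IsProbabilityMeasure μ] (S : ℝ)
    (hS : μ (Set.Icc (-S) S)ᶜ = 0) (δ : ℝ) (hδ : 0 < δ)
    (hG : ∀ m : ℝ, m ≠ 0 → |m| < δ →
      ∫ x, 1 / ((1 / m + a + (b + 1) * m + c * m ^ 2) - x) ∂μ = m) :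
    memV (fun m => 1 + a * m + b * m ^ 2 + c * m ^ 3) := by
  obtain ⟨ν, R, hR, hν, hsupp, hm, hv, hGν⟩ := strip_measure μ S hS
  have hae : ∀ᵐ x ∂ν, x ∈ Set.Icc (-R) R := by
    rw [ae_iff]; exact hsupp
  refine ⟨ν, ⟨hν, ⟨R, hsupp⟩, ?_, hm⟩, hv, ?_, by simp, ?_⟩
  · rintro t rfl
    simp at hm hv
    rw [hm] at hv; simp at hv
  · fun_prop
  · have h1 : ∀ᶠ m : ℝ in nhds 0, 0 < 1 + a * m + b * m ^ 2 + c * m ^ 3 := by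
      have : ContinuousAt (fun m : ℝ => 1 + a * m + b * m ^ 2 + c * m ^ 3) 0 := by fun_prop
      exact this.eventually (lt_mem_nhds (by simp))
    have h2 : ∀ᶠ m : ℝ in nhds 0,
        0 < (1 + a * m + b * m ^ 2 + c * m ^ 3) + m ^ 2 - |m| * R := by
      have : ContinuousAt (fun m : ℝ => (1 + a * m + b * m ^ 2 + c * m ^ 3) + m ^ 2 - |m| * R) 0 := by
        fun_prop
      exact this.eventually (lt_mem_nhds (by simp))
    obtain ⟨ε, hε, h3⟩ := Metric.eventually_nhds_iff.1 (h1.and h2)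
    refine ⟨min ε δ, lt_min hε hδ, ?_⟩
    intro m hmε
    have hmδ : |m| < δ := lt_of_lt_of_le hmε (min_le_right _ _)
    obtain ⟨hV, hW⟩ := h3 (y := m) (by
      rw [Real.dist_eq, sub_zero]; exact lt_of_lt_of_le hmε (min_le_left _ _))
    set v : ℝ := 1 + a * m + b * m ^ 2 + c * m ^ 3 with hvdef
    have hk : ∀ x, cskKernel (fun m => 1 + a * m + b * m ^ 2 + c * m ^ 3) m x
        = v / (v + m * (m - x)) := fun x => rfl
    simp only [hk]
    have hden : ∀ x ∈ Set.Icc (-R) R, 0 < v + m * (m - x) := by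
      intro x hx
      have h4 : m * x ≤ |m| * R := by
        calc m * x ≤ |m * x| := le_abs_self _
          _ = |m| * |x| := abs_mul _ _
          _ ≤ |m| * R := by
            have := abs_le.2 hx
            gcongr
      nlinarith
    have hlow : ∀ x ∈ Set.Icc (-R) R, v + m ^ 2 - |m| * R ≤ v + m * (m - x) := by
      intro x hx
      have h4 : m * x ≤ |m| * R := by
        calc m * x ≤ |m * x| := le_abs_self _
          _ = |m| * |x| := abs_mul _ _
          _ ≤ |m| * R := by
            have := abs_le.2 hx
            gcongr
      nlinarith
    refine ⟨?_, ?_⟩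
    · filter_upwards [hae] with x hx
      exact div_nonneg hV.le (hden x hx).le
    by_cases hm0 : m = 0
    · have hv1 : v ≠ 0 := hV.ne'
      subst hm0
      simp [hv1, hm]
    have hz : R < |1 / m + a + (b + 1) * m + c * m ^ 2| := by
      have e1 : 1 / m + a + (b + 1) * m + c * m ^ 2 = (v + m ^ 2) / m := by
        rw [hvdef]; field_simp; ring
      rw [e1, abs_div, lt_div_iff₀ (abs_pos.2 hm0)]
      have := le_abs_self (v + m ^ 2)
      linarith
    set z := 1 / m + a + (b + 1) * m + c * m ^ 2 with hzdef
    have hzm : z - m = v / m := by rw [hzdef, hvdef]; field_simp; ring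
    have hzne : z - m ≠ 0 := by rw [hzm]; exact div_ne_zero hV.ne' hm0
    have hintg := hGν z hz (by rw [hG m hm0 hmδ]; exact hzne)
    rw [hG m hm0 hmδ, hzm] at hintg
    have hfz : ∀ x, v / (v + m * (m - x)) = (v / m) * (1 / (z - x)) := by
      intro x
      have : v + m * (m - x) = m * (z - x) := by
        have : z = m + v / m := by linarith
        rw [this]; field_simp; ring
      rw [this]
      rw [div_mul_div_comm, mul_one]
    have hI : ∫ x, v / (v + m * (m - x)) ∂ν = 1 := by
      simp only [hfz]
      rw [integral_const_mul, hintg]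
      have := hV.ne'
      field_simp
    refine ⟨hI, ?_⟩
    have hintg : Integrable (fun x => v / (v + m * (m - x))) ν := by
      refine Integrable.of_bound (C := v / (v + m ^ 2 - |m| * R)) ?_ ?_
      · exact Measurable.aestronglyMeasurable (by fun_prop)
      · filter_upwards [hae] with x hx
        rw [Real.norm_eq_abs, abs_of_nonneg (div_nonneg hV.le (hden x hx).le)]
        exact div_le_div_of_nonneg_left hV.le hW (hlow x hx)
    have : ∫ x, x * (v / (v + m * (m - x))) ∂ν
        = ∫ x, ((v + m ^ 2) / m * (v / (v + m * (m - x))) - v / m) ∂ν := by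
      apply integral_congr_ae
      filter_upwards [hae] with x hx
      have := (hden x hx).ne'
      field_simp
      ring
    rw [this, integral_sub (hintg.const_mul _) (integrable_const _), integral_const_mul, hI]
    simp
    field_simp
    ring

lemma cubic_param (B c : ℝ) (h : B ^ 3 < 27 * c ^ 2) :
    ∃ p q : ℝ, 0 < q ∧ c = -p * (p ^ 2 + q ^ 2) ∧ B = 3 * p ^ 2 - q ^ 2 := by
  have hroot : ∃ w : ℝ, w ^ 3 - B * w - 2 * c = 0 := by
    set K : ℝ := 1 + |B| + 2 * |c| with hK
    have hB := abs_nonneg B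
    have hc := abs_nonneg c
    have hK1 : 1 ≤ K := by rw [hK]; linarith
    have hK2 : K ≤ K ^ 2 := by nlinarith
    have hb1 : |B| * K + 2 * |c| * K ≤ K ^ 2 := by nlinarith
    have hb3 : 2 * |c| ≤ 2 * |c| * K := by nlinarith
    have hb4 : K ^ 2 ≤ K ^ 3 := by nlinarith [mul_nonneg (sub_nonneg.2 hK1) (sq_nonneg K)]
    have hBK : |B * K| = |B| * K := by rw [abs_mul, abs_of_nonneg (by linarith : (0:ℝ) ≤ K)]
    have e1 := abs_le.1 hBK.le
    have e2 := abs_le.1 (le_refl |c|)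
    have hcont : ContinuousOn (fun w : ℝ => w ^ 3 - B * w - 2 * c) (Set.Icc (-K) K) := by fun_prop
    have := intermediate_value_Icc (by linarith : -K ≤ K) hcont
    have h0 : (0:ℝ) ∈ Set.Icc ((-K) ^ 3 - B * (-K) - 2 * c) (K ^ 3 - B * K - 2 * c) := by
      constructor
      · have : (-K) ^ 3 = - K ^ 3 := by ring
        linarith
      · linarith
    obtain ⟨w, _, hw⟩ := this h0
    exact ⟨w, hw⟩
  obtain ⟨w, hw⟩ := hroot
  have hd : 0 < 3 * w ^ 2 / 4 - B := by
    by_contra hcon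
    push Not at hcon
    have h1 : 2 * c = w * (w ^ 2 - B) := by linarith
    have h2 : 4 * c ^ 2 = w ^ 2 * (w ^ 2 - B) ^ 2 := by
      have : (2 * c) ^ 2 = (w * (w ^ 2 - B)) ^ 2 := by rw [h1]
      linarith
    have h3 : 4 * B ^ 3 - 27 * (w ^ 2 * (w ^ 2 - B) ^ 2)
      = 27 * ((4 * B / 3 - w ^ 2) * (w ^ 2 - B / 3) ^ 2) := by ring
    have h4 : 0 ≤ (4 * B / 3 - w ^ 2) * (w ^ 2 - B / 3) ^ 2 :=
      mul_nonneg (by linarith) (sq_nonneg _)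
    linarith
  refine ⟨-w / 2, Real.sqrt (3 * w ^ 2 / 4 - B), Real.sqrt_pos.2 hd, ?_, ?_⟩
  · rw [Real.sq_sqrt hd.le]; linarith
  · rw [Real.sq_sqrt hd.le]; ring

lemma stieltjes_hasDerivAt (ν : Measure ℝ) [IsProbabilityMeasure ν] (K : Set ℝ)
    (hK : ∀ᵐ x ∂ν, x ∈ K) (z₀ : ℂ) (d : ℝ) (hd : 0 < d) (hz : ∀ x ∈ K, d ≤ ‖z₀ - (x : ℂ)‖) :
    DifferentiableAt ℂ (fun z : ℂ => ∫ x, (z - (x : ℂ))⁻¹ ∂ν) z₀ := by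
  have hlow : ∀ x ∈ K, ∀ z ∈ Metric.ball z₀ (d / 2), d / 2 ≤ ‖z - (x : ℂ)‖ := by
    intro x hx z hzb
    have h1 := hz x hx
    have h2 : ‖z - z₀‖ < d / 2 := by simpa [dist_eq_norm] using hzb
    have h3 : ‖z₀ - (x : ℂ)‖ ≤ ‖z - (x : ℂ)‖ + ‖z - z₀‖ := by
      have : z₀ - (x : ℂ) = (z - x) - (z - z₀) := by ring
      rw [this]; exact norm_sub_le _ _
    linarith
  have hmeas : ∀ z : ℂ, AEStronglyMeasurable (fun x : ℝ => (z - (x : ℂ))⁻¹) ν := by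
    intro z
    exact Measurable.aestronglyMeasurable
      ((measurable_const.sub Complex.measurable_ofReal).inv)
  have := hasDerivAt_integral_of_dominated_loc_of_deriv_le (μ := ν) (𝕜 := ℂ)
    (F := fun (z : ℂ) (x : ℝ) => (z - (x : ℂ))⁻¹)
    (F' := fun (z : ℂ) (x : ℝ) => -1 / (z - (x : ℂ)) ^ 2)
    (x₀ := z₀) (bound := fun _ => 1 / (d / 2) ^ 2) (Metric.ball_mem_nhds z₀ (half_pos hd))
    (Eventually.of_forall hmeas) ?_ ?_ ?_ (integrable_const _) ?_
  · exact this.2.differentiableAt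
  · refine Integrable.of_bound (C := 1 / d) (hmeas z₀) ?_
    filter_upwards [hK] with x hx
    rw [norm_inv, ← one_div]
    exact one_div_le_one_div_of_le hd (hz x hx)
  · exact Measurable.aestronglyMeasurable
      (measurable_const.div ((measurable_const.sub Complex.measurable_ofReal).pow_const 2))
  · filter_upwards [hK] with x hx z hzb
    rw [norm_div, norm_neg, norm_one, norm_pow]
    exact one_div_le_one_div_of_le (by positivity)
      (pow_le_pow_left₀ (by positivity) (hlow x hx z hzb) 2)
  · filter_upwards [hK] with x hx z hzb
    have h1 : z - (x : ℂ) ≠ 0 := by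
      intro h0
      have := hlow x hx z hzb
      rw [h0] at this; simp at this; linarith
    have := ((hasDerivAt_id z).sub_const (x : ℂ)).inv h1
    exact this

lemma stieltjes_im (ν : Measure ℝ) [IsProbabilityMeasure ν] (z : ℂ) (hz : 0 < z.im) :
    ∃ G : ℂ, (∫ x, (z - (x : ℂ))⁻¹ ∂ν) = G ∧ G ≠ 0 ∧ (z - G⁻¹).im ≤ 0 := by
  refine ⟨_, rfl, ?_⟩
  set G : ℂ := ∫ x, (z - (x : ℂ))⁻¹ ∂ν with hG
  have hlow : ∀ x : ℝ, z.im ≤ ‖z - (x : ℂ)‖ := by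
    intro x
    have := Complex.abs_im_le_norm (z - (x : ℂ))
    simp only [Complex.sub_im, Complex.ofReal_im, sub_zero] at this
    exact (le_abs_self _).trans this
  have hmeas : Measurable (fun x : ℝ => (z - (x : ℂ))⁻¹) :=
    (measurable_const.sub Complex.measurable_ofReal).inv
  have hbd : ∀ x : ℝ, ‖(z - (x : ℂ))⁻¹‖ ≤ 1 / z.im := by
    intro x
    rw [norm_inv, ← one_div]
    exact one_div_le_one_div_of_le hz (hlow x)
  have hintg : Integrable (fun x : ℝ => (z - (x : ℂ))⁻¹) ν :=
    Integrable.of_bound (C := 1 / z.im) hmeas.aestronglyMeasurable (Eventually.of_forall hbd)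
  set g : ℝ → ℝ := fun x => ‖(z - (x : ℂ))⁻¹‖ with hg
  have hgi : Integrable g ν := hintg.norm
  have hg2 : Integrable (fun x => g x ^ 2) ν := by
    refine Integrable.of_bound (C := (1 / z.im) ^ 2) (by fun_prop) (Eventually.of_forall ?_)
    intro x
    rw [norm_pow, Real.norm_eq_abs, abs_of_nonneg (norm_nonneg _)]
    exact pow_le_pow_left₀ (norm_nonneg _) (hbd x) 2
  have him : G.im = - z.im * ∫ x, g x ^ 2 ∂ν := by
    have h1 : G.im = ∫ x, ((z - (x : ℂ))⁻¹).im ∂ν := by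
      have := integral_im hintg
      exact this.symm
    rw [h1, ← integral_const_mul]
    congr 1
    ext x
    simp only [hg, Complex.inv_im, norm_inv, inv_pow, ← Complex.normSq_eq_norm_sq]
    simp
    ring
  have hpos : 0 < ∫ x, g x ^ 2 ∂ν := by
    rw [integral_pos_iff_support_of_nonneg (fun x => sq_nonneg _) hg2]
    have : Function.support (fun x => g x ^ 2) = Set.univ := by
      ext x
      simp only [Function.mem_support, Set.mem_univ, iff_true, hg]
      have : z - (x : ℂ) ≠ 0 := by
        intro h0; have := hlow x; rw [h0] at this; simp at this; linarith
      exact pow_ne_zero _ (norm_ne_zero_iff.2 (inv_ne_zero this))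
    rw [this]; simp
  have hle : ‖G‖ ^ 2 ≤ ∫ x, g x ^ 2 ∂ν := by
    have h1 : ‖G‖ ≤ ∫ x, g x ∂ν := norm_integral_le_integral_norm _
    have h2 : (∫ x, g x ∂ν) ^ 2 ≤ ∫ x, g x ^ 2 ∂ν := by
      set t := ∫ x, g x ∂ν with ht
      have h3 : 0 ≤ ∫ x, (g x - t) ^ 2 ∂ν := integral_nonneg (fun x => sq_nonneg _)
      have h4 : ∫ x, (g x - t) ^ 2 ∂ν = (∫ x, g x ^ 2 ∂ν) - t ^ 2 := by
        have : ∀ x, (g x - t) ^ 2 = g x ^ 2 - (2 * t * g x - t ^ 2) := fun x => by ring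
        simp only [this]
        have hi : Integrable (fun x => 2 * t * g x - t ^ 2) ν :=
          (hgi.const_mul _).sub (integrable_const _)
        rw [integral_sub hg2 hi,
          integral_sub (hgi.const_mul _) (integrable_const _), integral_const_mul, ← ht]
        simp
        ring
      linarith
    exact (pow_le_pow_left₀ (norm_nonneg _) h1 2).trans h2
  have hne : G ≠ 0 := by
    intro h0
    rw [h0] at him
    simp at him
    rcases him with h | h <;> linarith
  refine ⟨hne, ?_⟩
  rw [Complex.sub_im, Complex.inv_im, him, Complex.normSq_eq_norm_sq]
  have hGp : 0 < ‖G‖ ^ 2 := by positivity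
  have : z.im ≤ (z.im * ∫ x, g x ^ 2 ∂ν) / ‖G‖ ^ 2 := by
    rw [le_div_iff₀ hGp]; gcongr
  have e : -(-z.im * ∫ x, g x ^ 2 ∂ν) / ‖G‖ ^ 2 = (z.im * ∫ x, g x ^ 2 ∂ν) / ‖G‖ ^ 2 := by ring
  rw [e]; linarith

lemma necessity (a b c : ℝ) (h : memV (fun m => 1 + a * m + b * m ^ 2 + c * m ^ 3)) :
    (b + 1) ^ 3 ≥ 27 * c ^ 2 := by
  by_contra hcon
  push Not at hcon
  obtain ⟨p, q, hq, hc, hB⟩ := cubic_param (b + 1) c hcon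
  obtain ⟨ν, ⟨hν, ⟨R, hR⟩, -, -⟩, -, -, -, ε, hε, hk⟩ := h
  have hae : ∀ᵐ x ∂ν, x ∈ Set.Icc (-R) R := by
    rw [ae_iff]; exact hR
  set G : ℂ → ℂ := fun z => ∫ x, (z - (x : ℂ))⁻¹ ∂ν with hGdef
  set U : Set ℂ := {z | 0 < z.im} ∪ {z | R < z.re} with hU
  have hUo : IsOpen U :=
    (isOpen_lt continuous_const Complex.continuous_im).union
      (isOpen_lt continuous_const Complex.continuous_re)
  have hUc : IsPreconnected U := by
    refine IsPreconnected.union (⟨R + 1, 1⟩ : ℂ) ?_ ?_ ?_ ?_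
    · simp
    · simp
    · exact (convex_halfSpace_im_gt 0).isPreconnected
    · exact (convex_halfSpace_re_gt R).isPreconnected
  have hGd : DifferentiableOn ℂ G U := by
    intro z hz
    apply DifferentiableAt.differentiableWithinAt
    rcases hz with hz | hz
    · refine stieltjes_hasDerivAt ν _ hae z z.im hz ?_
      intro x hx
      have := Complex.abs_im_le_norm (z - (x : ℂ))
      simp only [Complex.sub_im, Complex.ofReal_im, sub_zero] at this
      exact (le_abs_self _).trans this
    · refine stieltjes_hasDerivAt ν _ hae z (z.re - R) (sub_pos.2 hz) ?_
      intro x hx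
      have := Complex.abs_re_le_norm (z - (x : ℂ))
      simp only [Complex.sub_re, Complex.ofReal_re] at this
      have h2 := le_abs_self (z.re - x)
      linarith [hx.2]
  set Φ : ℂ → ℂ := fun z => (c : ℂ) * (z * G z - 1) ^ 3 + (b + 1) * (z * G z - 1) ^ 2 * G z
    + (a - z) * (z * G z - 1) * G z ^ 2 + G z ^ 3 with hΦ
  have hΦd : DifferentiableOn ℂ Φ U := by
    simp only [hΦ]
    fun_prop
  set V : ℝ → ℝ := fun m => 1 + a * m + b * m ^ 2 + c * m ^ 3 with hV
  set H : ℝ → ℝ := fun m => (V m + m ^ 2) / m with hH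
  have hsmall : ∀ᶠ m : ℝ in nhds 0, 0 < V m ∧ 0 < V m + m ^ 2 - m * R ∧
      2 * c * m ^ 3 + (b + 1) * m ^ 2 - 1 < 0 ∧ |m| < ε := by
    have h1 : ContinuousAt V 0 := by simp only [hV]; fun_prop
    have h2 : ContinuousAt (fun m => V m + m ^ 2 - m * R) 0 := by simp only [hV]; fun_prop
    have h3 : ContinuousAt (fun m : ℝ => 2 * c * m ^ 3 + (b + 1) * m ^ 2 - 1) 0 := by fun_prop
    have h4 : ContinuousAt (fun m : ℝ => |m|) 0 := by fun_prop
    refine (h1.eventually (lt_mem_nhds (by simp [hV]))).and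
      ((h2.eventually (lt_mem_nhds (by simp [hV]))).and
      ((h3.eventually (gt_mem_nhds (by simp))).and (h4.eventually (gt_mem_nhds (by simpa)))))
  have hval : ∀ m : ℝ, 0 < m → 0 < V m → |m| < ε → 0 < V m + m ^ 2 - m * R →
      Φ (H m : ℝ) = 0 := by
    intro m hm hVm hmε hW
    obtain ⟨-, h1, -⟩ := hk m hmε
    have hGm : G (H m : ℝ) = ((m / V m : ℝ) : ℂ) := by
      have h2 : ∀ x : ℝ, cskKernel V m x = (V m / m) * (H m - x)⁻¹ := by
        intro x
        have : V m + m * (m - x) = m * (H m - x) := by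
          simp only [hH]; field_simp; ring
        rw [cskKernel, this]
        rw [← div_eq_mul_inv, div_div]
      simp only [h2] at h1
      rw [integral_const_mul] at h1
      have h3 : ∫ x, (H m - x)⁻¹ ∂ν = m / V m := by
        field_simp at h1 ⊢
        linarith
      rw [← h3, ← integral_complex_ofReal]
      simp only [hGdef]
      congr 1
      ext x
      push_cast
      rfl
    have hVC : ((V m : ℝ) : ℂ) ≠ 0 := by exact_mod_cast hVm.ne'
    have hmC : (m : ℂ) ≠ 0 := by exact_mod_cast hm.ne'
    have hN : ((H m : ℝ) : ℂ) * ((m / V m : ℝ) : ℂ) - 1 = (m : ℂ) ^ 2 / (V m : ℝ) := by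
      simp only [hH]
      push_cast
      field_simp
      ring
    simp only [hΦ, hGm, hN]
    have hHm : ((H m : ℝ) : ℂ) = 1 / m + a + (b + 1) * m + c * m ^ 2 := by
      simp only [hH, hV]
      push_cast
      field_simp
      ring
    rw [hHm]
    push_cast
    field_simp
    ring
  have hzero : ∀ z ∈ U, Φ z = 0 := by
    obtain ⟨δ, hδ, hδ'⟩ := Metric.eventually_nhds_iff.1 hsmall
    have hpt : ∀ m : ℝ, 0 < m → m < δ → (0 < V m ∧ 0 < V m + m ^ 2 - m * R ∧
      2 * c * m ^ 3 + (b + 1) * m ^ 2 - 1 < 0 ∧ |m| < ε) := by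
      intro m h1 h2
      apply hδ'
      rw [Real.dist_eq, sub_zero, abs_of_pos h1]; exact h2
    set m₁ := δ / 2 with hm₁
    have hm₁p : 0 < m₁ := half_pos hδ
    obtain ⟨k1, k2, k3, k4⟩ := hpt m₁ hm₁p (half_lt_self hδ)
    have hHd : HasDerivAt H ((2 * c * m₁ ^ 3 + (b + 1) * m₁ ^ 2 - 1) / m₁ ^ 2) m₁ := by
      have e1 : HasDerivAt (fun m : ℝ => V m + m ^ 2) (a + 2 * (b + 1) * m₁ + 3 * c * m₁ ^ 2) m₁ := by
        have := ((((hasDerivAt_id m₁).const_mul a).const_add 1).add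
          ((hasDerivAt_pow 2 m₁).const_mul b)).add ((hasDerivAt_pow 3 m₁).const_mul c)
        have := this.add (hasDerivAt_pow 2 m₁)
        refine this.congr_deriv ?_
        norm_num
        ring
      refine (e1.div (hasDerivAt_id m₁) hm₁p.ne').congr_deriv ?_
      simp only [hV, id]
      field_simp
      ring
    have hne : (2 * c * m₁ ^ 3 + (b + 1) * m₁ ^ 2 - 1) / m₁ ^ 2 ≠ 0 :=
      div_ne_zero k3.ne (by positivity)
    have ht := hHd.tendsto_nhdsNE hne
    have hev : ∀ᶠ m in nhdsWithin m₁ {m₁}ᶜ, Φ (H m : ℝ) = 0 := by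
      have : ∀ᶠ m in nhds m₁, 0 < m ∧ m < δ :=
        (lt_mem_nhds hm₁p).and (gt_mem_nhds (half_lt_self hδ))
      filter_upwards [nhdsWithin_le_nhds this] with m hm
      obtain ⟨j1, j2, j3, j4⟩ := hpt m hm.1 hm.2
      exact hval m hm.1 j1 j4 j2
    have hfr : ∃ᶠ z in nhdsWithin ((H m₁ : ℝ) : ℂ) {((H m₁ : ℝ) : ℂ)}ᶜ, Φ z = 0 := by
      have hR2 : ∃ᶠ x in nhdsWithin (H m₁) {H m₁}ᶜ, Φ ((x : ℝ) : ℂ) = 0 :=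
        ht.frequently hev.frequently
      have hcast : Tendsto (fun x : ℝ => (x : ℂ)) (nhdsWithin (H m₁) {H m₁}ᶜ)
          (nhdsWithin ((H m₁ : ℝ) : ℂ) {((H m₁ : ℝ) : ℂ)}ᶜ) := by
        refine tendsto_nhdsWithin_iff.2 ⟨?_, ?_⟩
        · exact (Complex.continuous_ofReal.tendsto _).mono_left nhdsWithin_le_nhds
        · filter_upwards [self_mem_nhdsWithin] with x hx
          simpa using hx
      exact hcast.frequently hR2
    have hmem : ((H m₁ : ℝ) : ℂ) ∈ U := by
      right
      simp only [Set.mem_ofPred_eq, Complex.ofReal_re, hH]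
      rw [lt_div_iff₀ hm₁p]
      linarith
    have := (hΦd.analyticOnNhd hUo).eqOn_zero_of_preconnected_of_frequently_eq_zero hUc hmem hfr
    exact fun z hz => this hz
  set u : ℂ := ⟨p, q⟩ with hu
  have hu0 : u ≠ 0 := by
    intro h0
    have := congrArg Complex.im h0
    simp [hu] at this
    linarith
  set z₀ : ℂ := a + 2 * u - c / u ^ 2 with hz₀
  have hn : 0 < p ^ 2 + q ^ 2 := by positivity
  have ht : (c : ℂ) / u ^ 2 = - p * (starRingEnd ℂ u) / u := by
    have h1 : (c : ℂ) = - p * (u * starRingEnd ℂ u) := by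
      rw [Complex.mul_conj, hc]
      simp only [hu, Complex.normSq_mk]
      push_cast
      ring
    rw [h1]
    field_simp
  have hBu : ((b : ℂ) + 1) = u ^ 2 - 2 * c / u := by
    have h1 : ((b : ℂ) + 1) * u = u ^ 3 - 2 * c := by
      have h2 : ((b : ℂ) + 1) = ((3 * p ^ 2 - q ^ 2 : ℝ) : ℂ) := by rw [← hB]; push_cast; rfl
      rw [h2, hc]
      apply Complex.ext
      · simp [hu, pow_succ]; ring
      · simp [hu, pow_succ]; ring
    field_simp
    linear_combination h1
  have hz₀im : 0 < z₀.im := by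
    have h1 : z₀ = a + 2 * u + p * (starRingEnd ℂ u) / u := by
      rw [hz₀, ht]; ring
    have h2 : z₀.im = 2 * q ^ 3 / (p ^ 2 + q ^ 2) := by
      rw [h1]
      simp [hu, Complex.div_im, Complex.normSq_mk]
      field_simp
      ring
    rw [h2]; positivity
  obtain ⟨G₀, hG₀, hG₀ne, hMim⟩ := stieltjes_im ν z₀ hz₀im
  have hG₀' : G z₀ = G₀ := hG₀
  have hz₀U : z₀ ∈ U := Or.inl hz₀im
  have hGdiff : DifferentiableAt ℂ G z₀ := hGd.differentiableAt (hUo.mem_nhds hz₀U)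
  set M : ℂ → ℂ := fun z => z - (G z)⁻¹ with hM
  have hMd : DifferentiableAt ℂ M z₀ := by
    simp only [hM]
    exact differentiableAt_id.sub (hGdiff.inv (by rw [hG₀']; exact hG₀ne))
  have hP : ∀ᶠ z in nhds z₀, (c : ℂ) * M z ^ 3 + (b + 1) * M z ^ 2 + (a - z) * M z + 1 = 0 := by
    have e1 : ∀ᶠ z in nhds z₀, G z ≠ 0 :=
      hGdiff.continuousAt.eventually_ne (by rw [hG₀']; exact hG₀ne)
    filter_upwards [e1, hUo.mem_nhds hz₀U] with z h1 h2
    have h3 := hzero z h2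
    simp only [hΦ] at h3
    have h4 : z * G z - 1 = M z * G z := by
      simp only [hM]; field_simp
    rw [h4] at h3
    have h5 : G z ^ 3 * ((c : ℂ) * M z ^ 3 + (b + 1) * M z ^ 2 + (a - z) * M z + 1) = 0 := by
      linear_combination h3
    exact (mul_eq_zero.1 h5).resolve_left (pow_ne_zero 3 h1)
  have hP0 := hP.self_of_nhds
  set w : ℂ := M z₀ with hw
  have hwim : w.im ≤ 0 := by
    rw [hw]; simp only [hM, hG₀']; exact hMim
  have hfac : (1 - u * w) ^ 2 * (1 + (c : ℂ) / u ^ 2 * w) = 0 := by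
    rw [hBu, hz₀] at hP0
    rw [← hP0]
    field_simp
    ring
  have hw1 : u * w = 1 := by
    rcases mul_eq_zero.1 hfac with h1 | h1
    · have := pow_eq_zero_iff (two_ne_zero) |>.1 h1
      linear_combination -this
    · exfalso
      rw [ht] at h1
      have h2 : (p : ℂ) * (u * starRingEnd ℂ u) * w = u ^ 2 := by
        field_simp at h1
        linear_combination (-u) * h1
      rw [Complex.mul_conj] at h2
      simp only [hu, Complex.normSq_mk] at h2
      have h3 := congrArg Complex.im h2
      have h4 := congrArg Complex.re h2
      simp [pow_succ] at h3 h4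
      have hp : p ≠ 0 := by
        rintro rfl
        simp at h4
        linarith
      have h5 : p * ((p ^ 2 + q ^ 2) * w.im - 2 * q) = 0 := by linear_combination h3
      have h6 := (mul_eq_zero.1 h5).resolve_left hp
      nlinarith
  obtain ⟨M', hM'⟩ : ∃ M', HasDerivAt M M' z₀ := ⟨_, hMd.hasDerivAt⟩
  have hder : HasDerivAt (fun z => (c : ℂ) * M z ^ 3 + (b + 1) * M z ^ 2 + (a - z) * M z + 1)
      ((3 * c * w ^ 2 + 2 * (b + 1) * w + (a - z₀)) * M' - w) z₀ := by
    have := ((((hM'.pow 3).const_mul (c : ℂ)).add ((hM'.pow 2).const_mul ((b : ℂ) + 1))).add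
      (((hasDerivAt_id z₀).const_sub (a : ℂ)).mul hM')).add_const 1
    refine this.congr_deriv ?_
    simp only [← hw]
    norm_num
    ring
  have hder0 : HasDerivAt (fun z => (c : ℂ) * M z ^ 3 + (b + 1) * M z ^ 2 + (a - z) * M z + 1)
      0 z₀ := (hasDerivAt_const z₀ (0 : ℂ)).congr_of_eventuallyEq hP
  have hfin := hder.unique hder0
  have hw2 : w = 1 / u := by field_simp; linear_combination hw1
  have hcrit : 3 * c * w ^ 2 + 2 * (b + 1) * w + (a - z₀) = 0 := by
    rw [hw2, hBu, hz₀]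
    field_simp
    ring
  rw [hcrit] at hfin
  have : w = 0 := by linear_combination -hfin
  rw [this] at hw1
  simp at hw1

lemma exists_radius (B c : ℝ) (hB : 0 < B) (h : B ^ 3 ≥ 27 * c ^ 2) :
    ∃ (t C : ℝ) (s s' : ℝ → ℝ), 0 < t ∧ Continuous s ∧ Measurable s' ∧ (∀ θ, t ≤ s θ) ∧
      (∀ θ, s θ ≤ 2 * t) ∧ (∀ θ, s θ ^ 3 - B * s θ = 2 * c * Real.cos θ) ∧
      (∀ θ ∈ Set.Ioo 0 Real.pi, HasDerivAt s (s' θ) θ ∧ |s' θ| ≤ C ∧ 0 < 3 * s θ ^ 2 - B) := by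
  set t : ℝ := Real.sqrt (B / 3) with ht
  have htp : 0 < t := Real.sqrt_pos.2 (by positivity)
  have ht2 : B = 3 * t ^ 2 := by rw [ht, Real.sq_sqrt (by positivity)]; ring
  set l : ℝ := c / t ^ 3 with hl
  have hcl : c = l * t ^ 3 := by rw [hl]; field_simp
  have hl1 : l ^ 2 ≤ 1 := by
    rw [ht2, hcl] at h
    have h6 : 0 < t ^ 6 := by positivity
    have : l ^ 2 * t ^ 6 ≤ 1 * t ^ 6 := by nlinarith
    exact le_of_mul_le_mul_right this h6
  have hcos : ∀ θ, -1 ≤ l * Real.cos θ ∧ l * Real.cos θ ≤ 1 := by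
    intro θ
    have h1 : (l * Real.cos θ) ^ 2 ≤ 1 := by
      rw [mul_pow]
      have := Real.cos_sq_le_one θ
      nlinarith [sq_nonneg (Real.cos θ), sq_nonneg l]
    exact abs_le.1 ((sq_le_one_iff_abs_le_one _).1 h1)
  set φ : ℝ → ℝ := fun θ => Real.arccos (l * Real.cos θ) / 3 with hφ
  set D : ℝ → ℝ := fun θ => Real.sqrt (1 - (l * Real.cos θ) ^ 2) with hD
  have hφ0 : ∀ θ, 0 ≤ φ θ := fun θ => by
    have := Real.arccos_nonneg (l * Real.cos θ)
    simp only [hφ]; linarith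
  have hφ1 : ∀ θ, φ θ ≤ Real.pi / 3 := fun θ => by
    have := Real.arccos_le_pi (l * Real.cos θ)
    simp only [hφ]; linarith
  have hpi := Real.pi_pos
  have hlow : ∀ θ, 1 / 2 ≤ Real.cos (φ θ) := fun θ => by
    rw [← Real.cos_pi_div_three]
    exact Real.cos_le_cos_of_nonneg_of_le_pi (hφ0 θ) (by linarith) (hφ1 θ)
  refine ⟨t, 2 * t, fun θ => 2 * t * Real.cos (φ θ),
    fun θ => 2 * t * (-Real.sin (φ θ) * (l * Real.sin θ / D θ / 3)), htp, ?_, ?_, ?_, ?_, ?_, ?_⟩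
  · simp only [hφ]
    have := Real.continuous_arccos
    fun_prop
  · have := Real.continuous_arccos
    have h1 : Measurable φ := by
      apply Continuous.measurable
      simp only [hφ]; fun_prop
    have h2 : Measurable D := by
      apply Continuous.measurable
      simp only [hD]; fun_prop
    fun_prop
  · intro θ
    have := hlow θ
    simp only
    nlinarith
  · intro θ
    have := Real.cos_le_one (φ θ)
    simp only
    nlinarith
  · intro θ
    have h3 : Real.cos (3 * φ θ) = l * Real.cos θ := by
      have : 3 * φ θ = Real.arccos (l * Real.cos θ) := by simp only [hφ]; ring
      rw [this, Real.cos_arccos (hcos θ).1 (hcos θ).2]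
    rw [Real.cos_three_mul] at h3
    simp only
    rw [ht2, hcl]
    linear_combination 2 * t ^ 3 * h3
  · intro θ hθ
    have hsin : 0 < Real.sin θ := Real.sin_pos_of_pos_of_lt_pi hθ.1 hθ.2
    have hsc := Real.sin_sq_add_cos_sq θ
    have hlt : (l * Real.cos θ) ^ 2 < 1 := by
      rw [mul_pow]
      nlinarith [sq_nonneg (Real.cos θ), sq_nonneg l]
    have hlt' := abs_lt.1 ((sq_lt_one_iff_abs_lt_one _).1 hlt)
    have hDp : 0 < D θ := Real.sqrt_pos.2 (by linarith)
    have hDsin : Real.sin θ ≤ D θ := by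
      apply Real.le_sqrt_of_sq_le
      rw [mul_pow]
      nlinarith [sq_nonneg (Real.cos θ), sq_nonneg l]
    refine ⟨?_, ?_, ?_⟩
    · have h1 : HasDerivAt φ (l * Real.sin θ / D θ / 3) θ := by
        have := ((Real.hasDerivAt_arccos hlt'.1.ne' hlt'.2.ne).comp θ
          ((Real.hasDerivAt_cos θ).const_mul l)).div_const 3
        refine this.congr_deriv ?_
        simp only [hD]
        ring
      exact h1.cos.const_mul (2 * t)
    · have h1 : |l| ≤ 1 := (sq_le_one_iff_abs_le_one _).1 hl1
      have h2 : |Real.sin (φ θ)| ≤ 1 := Real.abs_sin_le_one _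
      have h3 : |l * Real.sin θ / D θ / 3| ≤ 1 := by
        rw [mul_div_assoc, mul_div_assoc, abs_mul, abs_of_nonneg (by positivity : 0 ≤ Real.sin θ / D θ / 3)]
        have : Real.sin θ / D θ ≤ 1 := (div_le_one hDp).2 hDsin
        have h4 : 0 ≤ Real.sin θ / D θ := by positivity
        nlinarith [abs_nonneg l]
      rw [abs_mul (2 * t), abs_mul (-Real.sin (φ θ)), abs_neg, abs_of_pos (by positivity : 0 < 2 * t)]
      have : |Real.sin (φ θ)| * |l * Real.sin θ / D θ / 3| ≤ 1 * 1 := by gcongr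
      nlinarith
    · have h1 : φ θ < Real.pi / 3 := by
        have : Real.arccos (l * Real.cos θ) < Real.pi := by
          rw [← Real.arccos_neg_one]
          exact Real.strictAntiOn_arccos ⟨le_refl _, by norm_num⟩ ⟨hlt'.1.le, hlt'.2.le⟩ hlt'.1
        simp only [hφ]; linarith
      have h2 : 1 / 2 < Real.cos (φ θ) := by
        rw [← Real.cos_pi_div_three]
        exact Real.cos_lt_cos_of_nonneg_of_le_pi (hφ0 θ) (by linarith) h1
      simp only
      rw [ht2]
      have h3 : 1 / 4 < Real.cos (φ θ) ^ 2 := by nlinarith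
      have h4 : 0 < t ^ 2 := by positivity
      nlinarith

lemma exists_primitive (r : ℝ) (hr : 0 < r) (g : ℂ → ℂ) (hg : DifferentiableOn ℂ g (Metric.ball 0 r))
    (hreal : ∀ x : ℝ, (g x).im = 0) :
    ∃ F : ℂ → ℂ, (∀ ζ ∈ Metric.ball (0 : ℂ) r, HasDerivAt F (g ζ) ζ) ∧
      ∀ x : ℝ, |x| < r → (F x).im = 0 := by
  obtain ⟨F, hF0, hF⟩ := hg.isExactOn_ball.with_val_at 0 0
  refine ⟨F, hF, ?_⟩
  intro x hx
  have hder : ∀ y ∈ Set.Ioo (-r) r, HasDerivWithinAt (fun y : ℝ => (F y).im) 0 (Set.Ioo (-r) r) y := by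
    intro y hy
    have h1 := hF (y : ℂ) (by simpa [abs_lt] using hy)
    have h2 := h1.comp_ofReal
    have h3 := (Complex.imCLM.hasFDerivAt.comp_hasDerivAt y h2)
    have h4 : HasDerivAt (fun y : ℝ => (F y).im) ((g y).im) y := h3
    rw [hreal] at h4
    exact h4.hasDerivWithinAt
  have := (convex_Ioo (-r) r).norm_image_sub_le_of_norm_hasDerivWithin_le (C := 0) hder
    (by simp) (x := 0) (y := x) (by simp [hr]) (abs_lt.1 hx)
  simp [hF0] at this
  exact this

lemma measure_of_density (w X : ℝ → ℝ) (S : ℝ) (hw : Measurable w)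
    (hw0 : ∀ θ ∈ Set.Ioo 0 Real.pi, 0 ≤ w θ) (hwi : IntervalIntegrable w volume 0 Real.pi)
    (hw1 : ∫ θ in (0 : ℝ)..Real.pi, w θ = 1) (hX : Continuous X) (hXS : ∀ θ, |X θ| ≤ S) :
    ∃ μ : Measure ℝ, IsProbabilityMeasure μ ∧ μ (Set.Icc (-S) S)ᶜ = 0 ∧
      ∀ f : ℝ → ℝ, Measurable f → ∫ x, f x ∂μ = ∫ θ in (0 : ℝ)..Real.pi, w θ * f (X θ) := by
  have hpi := Real.pi_pos
  set ρ : Measure ℝ := (volume.restrict (Set.Ioo 0 Real.pi)).withDensity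
    (fun θ => ENNReal.ofReal (w θ)) with hρ
  have hintg : Integrable w (volume.restrict (Set.Ioo 0 Real.pi)) := by
    have := (intervalIntegrable_iff_integrableOn_Ioo_of_le hpi.le).1 hwi
    exact this
  have hnn : 0 ≤ᵐ[volume.restrict (Set.Ioo 0 Real.pi)] w := by
    filter_upwards [ae_restrict_mem measurableSet_Ioo] with θ hθ
    exact hw0 θ hθ
  have hρ1 : ρ Set.univ = 1 := by
    rw [hρ, withDensity_apply _ MeasurableSet.univ, Measure.restrict_univ,
      ← ofReal_integral_eq_lintegral_ofReal hintg hnn, ← integral_Ioc_eq_integral_Ioo,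
      ← intervalIntegral.integral_of_le hpi.le, hw1, ENNReal.ofReal_one]
  have : IsProbabilityMeasure ρ := ⟨hρ1⟩
  refine ⟨ρ.map X, Measure.isProbabilityMeasure_map hX.measurable.aemeasurable, ?_, ?_⟩
  · rw [Measure.map_apply hX.measurable measurableSet_Icc.compl]
    have : X ⁻¹' (Set.Icc (-S) S)ᶜ = ∅ := by
      ext θ
      simp only [Set.mem_preimage, Set.mem_compl_iff, Set.mem_empty_iff_false, iff_false, not_not]
      exact abs_le.1 (hXS θ)
    rw [this, measure_empty]
  · intro f hf
    rw [integral_map hX.measurable.aemeasurable hf.aestronglyMeasurable, hρ,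
      integral_withDensity_eq_integral_toReal_smul (by fun_prop) (by simp),
      intervalIntegral.integral_of_le hpi.le, integral_Ioc_eq_integral_Ioo]
    apply setIntegral_congr_fun measurableSet_Ioo
    intro θ hθ
    simp only [smul_eq_mul]
    rw [ENNReal.toReal_ofReal (hw0 θ hθ)]

def mpath (s : ℝ → ℝ) (θ : ℝ) : ℂ := Complex.exp (θ * Complex.I) / (s θ : ℂ)

def mpathD (s s' : ℝ → ℝ) (θ : ℝ) : ℂ := mpath s θ * (Complex.I - (s' θ : ℂ) / (s θ : ℂ))

lemma mpath_hasDerivAt (s s' : ℝ → ℝ) (θ : ℝ) (h0 : s θ ≠ 0) (h : HasDerivAt s (s' θ) θ) :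
    HasDerivAt (mpath s) (mpathD s s' θ) θ := by
  have h0' : (s θ : ℂ) ≠ 0 := by exact_mod_cast h0
  have h1 : HasDerivAt (fun θ : ℝ => Complex.exp (θ * Complex.I))
      (Complex.exp (θ * Complex.I) * (1 * Complex.I)) θ :=
    ((hasDerivAt_id θ).ofReal_comp.mul_const Complex.I).cexp
  have h2 : HasDerivAt (fun θ : ℝ => (s θ : ℂ)) (s' θ : ℂ) θ := h.ofReal_comp
  refine (h1.div h2 h0').congr_deriv ?_
  simp only [mpathD, mpath]
  field_simp

lemma mpath_continuous (s : ℝ → ℝ) (h0 : ∀ θ, s θ ≠ 0) (hs : Continuous s) :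
    Continuous (mpath s) := by
  unfold mpath
  refine Continuous.div (by fun_prop) (by fun_prop) ?_
  intro θ
  exact_mod_cast h0 θ

lemma mpath_norm (s : ℝ → ℝ) (θ : ℝ) (h0 : 0 < s θ) : ‖mpath s θ‖ = 1 / s θ := by
  unfold mpath
  rw [norm_div, Complex.norm_exp_ofReal_mul_I, Complex.norm_real, Real.norm_eq_abs, abs_of_pos h0]

lemma mpath_im (s : ℝ → ℝ) (θ : ℝ) : (mpath s θ).im = Real.sin θ / s θ := by
  unfold mpath
  rw [Complex.div_ofReal_im, Complex.exp_ofReal_mul_I_im]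

lemma contour_zero (t C : ℝ) (s s' : ℝ → ℝ) (ht : 0 < t) (hs : Continuous s) (hs' : Measurable s')
    (hlo : ∀ θ, t ≤ s θ) (hhi : ∀ θ, s θ ≤ 2 * t)
    (hd : ∀ θ ∈ Set.Ioo 0 Real.pi, HasDerivAt s (s' θ) θ ∧ |s' θ| ≤ C)
    (g L : ℂ → ℂ) (A : Set ℂ) (hA : A = {ζ | 1 / (2 * t) ≤ ‖ζ‖ ∧ ‖ζ‖ ≤ 1 / t})
    (hL : ∀ ζ ∈ A, HasDerivAt L (g ζ) ζ) (hg : ContinuousOn g A)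
    (hreal : ∀ x : ℝ, (x : ℂ) ∈ A → (L x).im = 0) :
    IntervalIntegrable (fun θ => (g (mpath s θ) * mpathD s s' θ).im) volume 0 Real.pi ∧
    ∫ θ in (0 : ℝ)..Real.pi, (g (mpath s θ) * mpathD s s' θ).im = 0 := by
  have hpi := Real.pi_pos
  have hsp : ∀ θ, 0 < s θ := fun θ => lt_of_lt_of_le ht (hlo θ)
  have hs0 : ∀ θ, s θ ≠ 0 := fun θ => (hsp θ).ne'
  have hmA : ∀ θ, mpath s θ ∈ A := by
    intro θ
    rw [hA]
    show _ ∧ _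
    rw [mpath_norm s θ (hsp θ)]
    exact ⟨one_div_le_one_div_of_le (hsp θ) (hhi θ), one_div_le_one_div_of_le ht (hlo θ)⟩
  have hmc := mpath_continuous s hs0 hs
  have hgm : Continuous (fun θ => g (mpath s θ)) := hg.comp_continuous hmc hmA
  have hLm : Continuous (fun θ => L (mpath s θ)) :=
    ContinuousOn.comp_continuous (fun ζ hζ => (hL ζ hζ).continuousAt.continuousWithinAt) hmc hmA
  have hs'i : IntervalIntegrable s' volume 0 Real.pi := by
    rw [intervalIntegrable_iff_integrableOn_Ioo_of_le hpi.le]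
    refine Measure.integrableOn_of_bounded (M := C) (by simp) hs'.aestronglyMeasurable ?_
    filter_upwards [ae_restrict_mem measurableSet_Ioo] with θ hθ
    exact (hd θ hθ).2
  have hI : IntervalIntegrable (fun θ => (g (mpath s θ) * mpathD s s' θ).im) volume 0 Real.pi := by
    have e : (fun θ => (g (mpath s θ) * mpathD s s' θ).im) =
        fun θ => (g (mpath s θ) * mpath s θ * Complex.I).im -
          ((g (mpath s θ) * mpath s θ).im / s θ) * s' θ := by
      funext θ
      have : g (mpath s θ) * mpathD s s' θ = g (mpath s θ) * mpath s θ * Complex.I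
          - g (mpath s θ) * mpath s θ * ((s' θ / s θ : ℝ) : ℂ) := by
        simp only [mpathD]; push_cast; ring
      rw [this, Complex.sub_im, Complex.im_mul_ofReal]
      ring
    rw [e]
    refine IntervalIntegrable.sub ?_ ?_
    · apply Continuous.intervalIntegrable
      exact Complex.continuous_im.comp ((hgm.mul hmc).mul continuous_const)
    · refine IntervalIntegrable.continuousOn_mul hs'i ?_
      apply Continuous.continuousOn
      exact (Complex.continuous_im.comp (hgm.mul hmc)).div hs hs0
  refine ⟨hI, ?_⟩
  have := intervalIntegral.integral_eq_sub_of_hasDerivAt_of_le hpi.le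
    (f := fun θ => (L (mpath s θ)).im) (f' := fun θ => (g (mpath s θ) * mpathD s s' θ).im)
    (Complex.continuous_im.comp hLm).continuousOn ?_ hI
  · rw [this]
    have h0 : mpath s 0 = ((1 / s 0 : ℝ) : ℂ) := by simp [mpath]
    have h1 : mpath s Real.pi = ((-1 / s Real.pi : ℝ) : ℂ) := by
      simp [mpath, Complex.exp_pi_mul_I]
    have a0 := hmA 0
    have a1 := hmA Real.pi
    rw [h0] at a0 ⊢
    rw [h1] at a1 ⊢
    rw [hreal _ a0, hreal _ a1, sub_zero]
  · intro θ hθ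
    have h1 := (hL _ (hmA θ)).comp θ (mpath_hasDerivAt s s' θ (hs0 θ) (hd θ hθ).1)
    exact Complex.imCLM.hasFDerivAt.comp_hasDerivAt θ h1

lemma path_identity (a B c : ℝ) (s : ℝ → ℝ) (θ : ℝ) (h0 : s θ ≠ 0)
    (hc : s θ ^ 3 - B * s θ = 2 * c * Real.cos θ) :
    1 / mpath s θ + a + B * mpath s θ + c * mpath s θ ^ 2 =
      ((a + 2 * s θ * Real.cos θ - c / s θ ^ 2 : ℝ) : ℂ) := by
  have h0' : (s θ : ℂ) ≠ 0 := by exact_mod_cast h0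
  have he : Complex.exp (θ * Complex.I) ≠ 0 := Complex.exp_ne_zero _
  have hk : ((Real.cos θ : ℝ) : ℂ) = (Complex.exp (θ * Complex.I) +
      1 / Complex.exp (θ * Complex.I)) / 2 := by
    rw [Complex.ofReal_cos, Complex.cos, one_div, ← Complex.exp_neg, neg_mul]
  have hc' : (s θ : ℂ) ^ 3 - B * s θ = 2 * c * ((Real.cos θ : ℝ) : ℂ) := by exact_mod_cast hc
  push_cast
  rw [← Complex.ofReal_cos, hk]
  rw [hk] at hc'
  unfold mpath
  generalize Complex.exp (θ * Complex.I) = e at *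
  generalize (s θ : ℂ) = u at *
  field_simp at hc' ⊢
  linear_combination (-e) * hc'

lemma path_facts (a B c : ℝ) (s s' : ℝ → ℝ) (hsp : ∀ θ, 0 < s θ)
    (hc : ∀ θ, s θ ^ 3 - B * s θ = 2 * c * Real.cos θ) (θ : ℝ) (hθ : θ ∈ Set.Ioo 0 Real.pi)
    (hd : HasDerivAt s (s' θ) θ) (hD : 0 < 3 * s θ ^ 2 - B) :
    -2 * s θ * Real.sin θ + 2 * s' θ * Real.cos θ + 2 * c * s' θ / s θ ^ 3 ≤ 0 ∧
    ((-2 * s θ * Real.sin θ + 2 * s' θ * Real.cos θ + 2 * c * s' θ / s θ ^ 3 : ℝ) : ℂ) =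
      (-1 / mpath s θ ^ 2 + B + 2 * c * mpath s θ) * mpathD s s' θ := by
  have hsin : 0 < Real.sin θ := Real.sin_pos_of_pos_of_lt_pi hθ.1 hθ.2
  have hsc := Real.sin_sq_add_cos_sq θ
  have hs := hsp θ
  have hDs : (3 * s θ ^ 2 - B) * s' θ = -2 * c * Real.sin θ := by
    have h1 : HasDerivAt (fun θ => s θ ^ 3 - B * s θ) (3 * s θ ^ 2 * s' θ - B * s' θ) θ := by
      refine ((hd.pow 3).sub (hd.const_mul B)).congr_deriv ?_
      norm_num
    have h2 : HasDerivAt (fun θ => 2 * c * Real.cos θ) (2 * c * (-Real.sin θ)) θ :=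
      (Real.hasDerivAt_cos θ).const_mul (2 * c)
    have e : (fun θ => s θ ^ 3 - B * s θ) = (fun θ => 2 * c * Real.cos θ) := funext hc
    rw [e] at h1
    have := h1.unique h2
    linarith
  constructor
  · set Y := -2 * s θ * Real.sin θ + 2 * s' θ * Real.cos θ + 2 * c * s' θ / s θ ^ 3 with hY
    have e1 : s θ ^ 3 * Y = -2 * s θ ^ 4 * Real.sin θ + (2 * Real.cos θ * s θ ^ 3 + 2 * c) * s' θ := by
      rw [hY]; field_simp; ring
    have e2 : s θ ^ 3 * (3 * s θ ^ 2 - B) * Y =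
        -4 * Real.sin θ * ((s θ ^ 3 + c * Real.cos θ) ^ 2 + c ^ 2 * Real.sin θ ^ 2) := by
      have h3 : s θ ^ 3 * (3 * s θ ^ 2 - B) * Y = (3 * s θ ^ 2 - B) * (s θ ^ 3 * Y) := by ring
      rw [h3, e1]
      linear_combination (2 * Real.cos θ * s θ ^ 3 + 2 * c) * hDs - 2 * s θ ^ 3 * Real.sin θ * hc θ
        + 4 * Real.sin θ * c ^ 2 * hsc
    have h4 : s θ ^ 3 * (3 * s θ ^ 2 - B) * Y ≤ 0 := by
      rw [e2]
      have : 0 ≤ Real.sin θ * ((s θ ^ 3 + c * Real.cos θ) ^ 2 + c ^ 2 * Real.sin θ ^ 2) := by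
        positivity
      linarith
    by_contra hcon
    push Not at hcon
    have : 0 < s θ ^ 3 * (3 * s θ ^ 2 - B) * Y := by positivity
    linarith
  · have hX : HasDerivAt (fun θ => a + 2 * s θ * Real.cos θ - c / s θ ^ 2)
        (-2 * s θ * Real.sin θ + 2 * s' θ * Real.cos θ + 2 * c * s' θ / s θ ^ 3) θ := by
      have h1 := (((hd.const_mul 2).mul (Real.hasDerivAt_cos θ)).const_add a).sub
        ((hasDerivAt_const θ c).div (hd.pow 2) (pow_ne_zero 2 hs.ne'))
      have h2 : HasDerivAt (fun θ => a + 2 * s θ * Real.cos θ - c / s θ ^ 2) _ θ := h1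
      refine h2.congr_deriv ?_
      simp only [Pi.pow_apply]
      field_simp
      ring
    have hm0 : mpath s θ ≠ 0 := by
      rw [← norm_pos_iff, mpath_norm s θ hs]; positivity
    have hH : HasDerivAt (fun ζ : ℂ => 1 / ζ + a + B * ζ + c * ζ ^ 2)
        (-1 / mpath s θ ^ 2 + B + 2 * c * mpath s θ) (mpath s θ) := by
      have h1 := ((((hasDerivAt_inv hm0).add_const (a : ℂ)).add
        ((hasDerivAt_id (mpath s θ)).const_mul (B : ℂ))).add
        (((hasDerivAt_id (mpath s θ)).pow 2).const_mul (c : ℂ)))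
      have h2 : HasDerivAt (fun ζ : ℂ => ζ⁻¹ + a + B * ζ + c * ζ ^ 2) _ (mpath s θ) := h1
      simp only [one_div]
      refine h2.congr_deriv ?_
      simp
      field_simp
    have h1 := hH.comp θ (mpath_hasDerivAt s s' θ hs.ne' hd)
    have h2 := hX.ofReal_comp
    have e : ((fun ζ : ℂ => 1 / ζ + a + B * ζ + c * ζ ^ 2) ∘ mpath s) =
        fun θ => ((a + 2 * s θ * Real.cos θ - c / s θ ^ 2 : ℝ) : ℂ) := by
      funext θ
      exact path_identity a B c s θ (hsp θ).ne' (hc θ)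
    rw [e] at h1
    exact h2.unique h1

lemma mass_identity (B c Y : ℝ) (m d q : ℂ) (q' : ℝ) (hm : m ≠ 0) (hd : d = m * q)
    (hq : q.im = q') (hY : (Y : ℂ) = (-1 / m ^ 2 + B + 2 * c * m) * d) :
    m.im * Y = -q' + ((B * m + 2 * c * m ^ 2) * d).im := by
  have h1 : m.im * Y = (m * (Y : ℂ)).im := by rw [Complex.im_mul_ofReal]
  have h2 : m * (Y : ℂ) = -q + (B * m + 2 * c * m ^ 2) * d := by
    rw [hY, hd]; field_simp; ring
  rw [h1, h2, Complex.add_im, Complex.neg_im, hq]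

lemma cauchy_identity (a B c Y X m0 z : ℝ) (m d q : ℂ) (hm : m ≠ 0) (hm0 : m0 ≠ 0)
    (hd : d = m * q) (hq : q.im = 1)
    (hY : (Y : ℂ) = (-1 / m ^ 2 + B + 2 * c * m) * d)
    (hX : 1 / m + a + B * m + c * m ^ 2 = (X : ℂ))
    (hz : z = 1 / m0 + a + B * m0 + c * m0 ^ 2)
    (h1 : (1 : ℂ) - m0 / m ≠ 0) (h2 : (1 : ℂ) - m0 * (B + c * m0) * m - c * m0 * m ^ 2 ≠ 0) :
    m.im * Y * (1 / (X - z)) = m0 + ((m0 * ((m0 / m ^ 2) / (1 - m0 / m)) +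
      m * ((-(m0 * (B + c * m0)) - 2 * c * m0 * m) /
        (1 - m0 * (B + c * m0) * m - c * m0 * m ^ 2))) * d).im := by
  have hm0' : (m0 : ℂ) ≠ 0 := by exact_mod_cast hm0
  have hXz : (X : ℂ) - z = -(1 / m0) * (1 - m0 / m) *
      (1 - m0 * (B + c * m0) * m - c * m0 * m ^ 2) := by
    rw [← hX, hz]; push_cast; field_simp; ring
  have e1 : m.im * Y * (1 / (X - z)) = (m * ((Y * (1 / (X - z)) : ℝ) : ℂ)).im := by
    rw [Complex.im_mul_ofReal, mul_assoc]
  have e2 : m * ((Y * (1 / (X - z)) : ℝ) : ℂ) = m0 * q + (m0 * ((m0 / m ^ 2) / (1 - m0 / m)) +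
      m * ((-(m0 * (B + c * m0)) - 2 * c * m0 * m) /
        (1 - m0 * (B + c * m0) * m - c * m0 * m ^ 2))) * d := by
    push_cast
    rw [hXz, hY, hd]
    have h1' : m - m0 ≠ 0 := by
      intro h; apply h1; rw [← sub_eq_zero.1 h, div_self hm, sub_self]
    have e3 : (1 : ℂ) - m0 / m = (m - m0) / m := by field_simp
    rw [e3]
    generalize hQ : (1 : ℂ) - m0 * (B + c * m0) * m - c * m0 * m ^ 2 = Q at *
    have hQ' : Q = 1 - m0 * (B + c * m0) * m - c * m0 * m ^ 2 := hQ.symm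
    field_simp
    rw [hQ']
    ring
  rw [e1, e2, Complex.add_im, Complex.im_ofReal_mul, hq, mul_one]

lemma exists_mu (a B c : ℝ) (hB : 0 < B) (h : B ^ 3 ≥ 27 * c ^ 2) :
    ∃ (μ : Measure ℝ) (S δ : ℝ), IsProbabilityMeasure μ ∧ μ (Set.Icc (-S) S)ᶜ = 0 ∧ 0 < δ ∧
      ∀ m : ℝ, m ≠ 0 → |m| < δ →
        ∫ x, 1 / ((1 / m + a + B * m + c * m ^ 2) - x) ∂μ = m := by
  obtain ⟨t, C, s, s', ht, hs, hs', hlo, hhi, hc, hd⟩ := exists_radius B c hB h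
  have hpi := Real.pi_pos
  have hsp : ∀ θ, 0 < s θ := fun θ => lt_of_lt_of_le ht (hlo θ)
  have hs0 : ∀ θ, s θ ≠ 0 := fun θ => (hsp θ).ne'
  have hd' : ∀ θ ∈ Set.Ioo 0 Real.pi, HasDerivAt s (s' θ) θ ∧ |s' θ| ≤ C :=
    fun θ hθ => ⟨(hd θ hθ).1, (hd θ hθ).2.1⟩
  have hmne : ∀ θ, mpath s θ ≠ 0 := fun θ => by
    have := hsp θ
    rw [← norm_pos_iff, mpath_norm s θ this]; positivity
  obtain ⟨A, hA⟩ : ∃ A : Set ℂ, A = {ζ | 1 / (2 * t) ≤ ‖ζ‖ ∧ ‖ζ‖ ≤ 1 / t} := ⟨_, rfl⟩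
  have hAne : ∀ ζ ∈ A, ζ ≠ 0 := by
    intro ζ hζ
    rw [hA] at hζ
    rw [← norm_pos_iff]
    exact lt_of_lt_of_le (by positivity) hζ.1
  have hmA : ∀ θ, mpath s θ ∈ A := by
    intro θ
    rw [hA]
    show _ ∧ _
    rw [mpath_norm s θ (hsp θ)]
    exact ⟨one_div_le_one_div_of_le (hsp θ) (hhi θ), one_div_le_one_div_of_le ht (hlo θ)⟩
  obtain ⟨X, hXdef⟩ : ∃ X : ℝ → ℝ, X = fun θ => a + 2 * s θ * Real.cos θ - c / s θ ^ 2 := ⟨_, rfl⟩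
  obtain ⟨Y, hYdef⟩ : ∃ Y : ℝ → ℝ, Y = fun θ =>
    -2 * s θ * Real.sin θ + 2 * s' θ * Real.cos θ + 2 * c * s' θ / s θ ^ 3 := ⟨_, rfl⟩
  have hXm : ∀ θ, 1 / mpath s θ + a + B * mpath s θ + c * mpath s θ ^ 2 = (X θ : ℂ) := by
    intro θ
    rw [hXdef]
    exact path_identity a B c s θ (hs0 θ) (hc θ)
  have hYm : ∀ θ ∈ Set.Ioo 0 Real.pi, Y θ ≤ 0 ∧
      (Y θ : ℂ) = (-1 / mpath s θ ^ 2 + B + 2 * c * mpath s θ) * mpathD s s' θ := by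
    intro θ hθ
    rw [hYdef]
    exact path_facts a B c s s' hsp hc θ hθ (hd θ hθ).1 (hd θ hθ).2.2
  have hXc : Continuous X := by
    rw [hXdef]
    refine Continuous.sub (by fun_prop) (Continuous.div (by fun_prop) (by fun_prop) ?_)
    intro θ
    exact pow_ne_zero 2 (hs0 θ)
  have hXS : ∀ θ, |X θ| ≤ |a| + 4 * t + |c| / t ^ 2 := by
    intro θ
    rw [hXdef]
    have h1 : |2 * s θ * Real.cos θ| ≤ 4 * t := by
      rw [abs_mul, abs_of_pos (by have := hsp θ; positivity : 0 < 2 * s θ)]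
      have := Real.abs_cos_le_one θ
      have := hhi θ
      have := hsp θ
      nlinarith [abs_nonneg (Real.cos θ)]
    have h2 : |c / s θ ^ 2| ≤ |c| / t ^ 2 := by
      rw [abs_div, abs_of_pos (by have := hsp θ; positivity : 0 < s θ ^ 2)]
      have := hlo θ
      gcongr
    calc _ ≤ |a + 2 * s θ * Real.cos θ| + |c / s θ ^ 2| := abs_sub _ _
      _ ≤ |a| + |2 * s θ * Real.cos θ| + |c / s θ ^ 2| := by gcongr; exact abs_add_le _ _
      _ ≤ _ := by linarith
  have hqim : ∀ θ, (Complex.I - (s' θ : ℂ) / (s θ : ℂ)).im = 1 := by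
    intro θ
    rw [← Complex.ofReal_div, Complex.sub_im, Complex.ofReal_im, Complex.I_im, sub_zero]
  obtain ⟨w, hwdef⟩ : ∃ w : ℝ → ℝ, w = fun θ => -(1 / Real.pi) * ((mpath s θ).im * Y θ) := ⟨_, rfl⟩
  have hmass := contour_zero t C s s' ht hs hs' hlo hhi hd' (fun ζ => B * ζ + 2 * c * ζ ^ 2)
    (fun ζ => B * ζ ^ 2 / 2 + 2 * c * ζ ^ 3 / 3) A hA
    (by
      intro ζ _
      have h1 := ((((hasDerivAt_id ζ).pow 2).const_mul (B : ℂ)).div_const 2).add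
        ((((hasDerivAt_id ζ).pow 3).const_mul (2 * c : ℂ)).div_const 3)
      have h2 : HasDerivAt (fun ζ : ℂ => B * ζ ^ 2 / 2 + 2 * c * ζ ^ 3 / 3) _ ζ := h1
      refine h2.congr_deriv ?_
      simp
      ring)
    (by fun_prop)
    (by
      intro x _
      have : (B : ℂ) * x ^ 2 / 2 + 2 * c * x ^ 3 / 3 =
        ((B * x ^ 2 / 2 + 2 * c * x ^ 3 / 3 : ℝ) : ℂ) := by push_cast; ring
      rw [this, Complex.ofReal_im])
  have hweq : ∀ θ ∈ Set.Ioo 0 Real.pi, w θ = -(1 / Real.pi) * (-1 +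
      ((B * mpath s θ + 2 * c * mpath s θ ^ 2) * mpathD s s' θ).im) := by
    intro θ hθ
    rw [hwdef]
    simp only
    rw [mass_identity B c (Y θ) (mpath s θ) (mpathD s s' θ) _ 1 (hmne θ) rfl (hqim θ) (hYm θ hθ).2]
  have hint0 : IntervalIntegrable (fun θ => -(1 / Real.pi) * (-1 +
      ((B * mpath s θ + 2 * c * mpath s θ ^ 2) * mpathD s s' θ).im)) volume 0 Real.pi :=
    (intervalIntegrable_const.add hmass.1).const_mul _
  have hwi : IntervalIntegrable w volume 0 Real.pi := by
    rw [intervalIntegrable_iff_integrableOn_Ioo_of_le hpi.le] at hint0 ⊢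
    exact hint0.congr_fun (fun θ hθ => (hweq θ hθ).symm) measurableSet_Ioo
  have hw1 : ∫ θ in (0 : ℝ)..Real.pi, w θ = 1 := by
    have : ∫ θ in (0 : ℝ)..Real.pi, w θ = ∫ θ in (0 : ℝ)..Real.pi, -(1 / Real.pi) * (-1 +
      ((B * mpath s θ + 2 * c * mpath s θ ^ 2) * mpathD s s' θ).im) := by
      rw [intervalIntegral.integral_of_le hpi.le, intervalIntegral.integral_of_le hpi.le,
        integral_Ioc_eq_integral_Ioo, integral_Ioc_eq_integral_Ioo]
      exact setIntegral_congr_fun measurableSet_Ioo hweq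
    rw [this, intervalIntegral.integral_const_mul,
      intervalIntegral.integral_add intervalIntegrable_const hmass.1, hmass.2]
    simp
  have hwm : Measurable w := by
    rw [hwdef, hYdef]
    simp only [mpath_im]
    have := hs.measurable
    fun_prop
  have hw0 : ∀ θ ∈ Set.Ioo 0 Real.pi, 0 ≤ w θ := by
    intro θ hθ
    have hsin : 0 < Real.sin θ := Real.sin_pos_of_pos_of_lt_pi hθ.1 hθ.2
    have h1 := (hYm θ hθ).1
    have h2 : 0 < (mpath s θ).im := by rw [mpath_im]; exact div_pos hsin (hsp θ)
    rw [hwdef]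
    simp only
    have h3 : 0 < 1 / Real.pi := by positivity
    have h4 : (mpath s θ).im * Y θ ≤ 0 := mul_nonpos_of_nonneg_of_nonpos h2.le h1
    nlinarith
  obtain ⟨μ, hμ, hμS, hμf⟩ := measure_of_density w X _ hwm hw0 hwi hw1 hXc hXS
  set r : ℝ := 2 / t with hr
  have hrp : 0 < r := by positivity
  set K : ℝ := (|B| + |c|) * r + |c| * r ^ 2 with hK
  have hK0 : 0 ≤ K := by positivity
  refine ⟨μ, _, min 1 (min (1 / (2 * t)) (1 / (K + 1))), hμ, hμS, by positivity, ?_⟩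
  intro m0 hm0 hlt
  have hl1 : |m0| < 1 := lt_of_lt_of_le hlt (min_le_left _ _)
  have hl2 : |m0| < 1 / (2 * t) :=
    lt_of_lt_of_le hlt ((min_le_right _ _).trans (min_le_left _ _))
  have hl3 : |m0| < 1 / (K + 1) :=
    lt_of_lt_of_le hlt ((min_le_right _ _).trans (min_le_right _ _))
  have hl4 : |m0| * K < 1 := by
    rw [lt_div_iff₀ (by positivity)] at hl3
    nlinarith [abs_nonneg m0]
  have hQ : ∀ ζ ∈ Metric.ball (0 : ℂ) r,
      (1 : ℂ) - m0 * (B + c * m0) * ζ - c * m0 * ζ ^ 2 ≠ 0 := by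
    intro ζ hζ h0
    have hζ' : ‖ζ‖ < r := by simpa using hζ
    have e : (1 : ℂ) = m0 * (B + c * m0) * ζ + c * m0 * ζ ^ 2 := by linear_combination h0
    have h1 : ‖(m0 : ℂ) * (B + c * m0) * ζ + c * m0 * ζ ^ 2‖ ≤ |m0| * K := by
      calc _ ≤ ‖(m0 : ℂ) * (B + c * m0) * ζ‖ + ‖(c : ℂ) * m0 * ζ ^ 2‖ := norm_add_le _ _
        _ = |m0| * ‖(B : ℂ) + c * m0‖ * ‖ζ‖ + |c| * |m0| * ‖ζ‖ ^ 2 := by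
          simp only [norm_mul, norm_pow, Complex.norm_real, Real.norm_eq_abs]
        _ ≤ |m0| * (|B| + |c|) * r + |c| * |m0| * r ^ 2 := by
          have : ‖(B : ℂ) + c * m0‖ ≤ |B| + |c| := by
            calc _ ≤ ‖(B : ℂ)‖ + ‖(c : ℂ) * m0‖ := norm_add_le _ _
              _ = |B| + |c| * |m0| := by
                simp only [norm_mul, Complex.norm_real, Real.norm_eq_abs]
              _ ≤ _ := by nlinarith [abs_nonneg c]
          gcongr
        _ = _ := by rw [hK]; ring
    rw [← e, norm_one] at h1
    linarith
  have hAball : ∀ ζ ∈ A, ζ ∈ Metric.ball (0 : ℂ) r := by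
    intro ζ hζ
    rw [hA] at hζ
    have : 1 / t < r := by rw [hr]; gcongr; norm_num
    simpa using lt_of_le_of_lt hζ.2 this
  have hslit : ∀ ζ ∈ A, (1 : ℂ) - m0 / ζ ∈ Complex.slitPlane := by
    intro ζ hζ
    have hn : 0 < ‖ζ‖ := norm_pos_iff.2 (hAne ζ hζ)
    rw [hA] at hζ
    left
    have h1 : ‖(m0 : ℂ) / ζ‖ < 1 := by
      rw [norm_div, Complex.norm_real, Real.norm_eq_abs, div_lt_one hn]
      exact lt_of_lt_of_le hl2 hζ.1
    have h2 := (Complex.re_le_norm ((m0 : ℂ) / ζ))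
    rw [Complex.sub_re, Complex.one_re]
    linarith
  obtain ⟨F, hF, hFim⟩ := exists_primitive r hrp
    (fun ζ => ζ * ((-(m0 * (B + c * m0)) - 2 * c * m0 * ζ) /
        (1 - m0 * (B + c * m0) * ζ - c * m0 * ζ ^ 2)))
    (by
      refine DifferentiableOn.mul differentiableOn_id (DifferentiableOn.div ?_ ?_ hQ)
      · fun_prop
      · fun_prop)
    (by
      intro x
      have : (x : ℂ) * ((-(m0 * (B + c * m0)) - 2 * c * m0 * x) /
        (1 - m0 * (B + c * m0) * x - c * m0 * x ^ 2)) =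
        ((x * ((-(m0 * (B + c * m0)) - 2 * c * m0 * x) /
        (1 - m0 * (B + c * m0) * x - c * m0 * x ^ 2)) : ℝ) : ℂ) := by push_cast; ring
      rw [this, Complex.ofReal_im])
  have hcau := contour_zero t C s s' ht hs hs' hlo hhi hd'
    (fun ζ => m0 * ((m0 / ζ ^ 2) / (1 - m0 / ζ)) +
      ζ * ((-(m0 * (B + c * m0)) - 2 * c * m0 * ζ) /
        (1 - m0 * (B + c * m0) * ζ - c * m0 * ζ ^ 2)))
    (fun ζ => m0 * Complex.log (1 - m0 / ζ) + F ζ) A hA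
    (by
      intro ζ hζ
      refine HasDerivAt.add (HasDerivAt.const_mul _ ?_) (hF ζ (hAball ζ hζ))
      refine HasDerivAt.clog ?_ (hslit ζ hζ)
      have h1 := ((hasDerivAt_inv (hAne ζ hζ)).const_mul (m0 : ℂ)).const_sub 1
      simp only [div_eq_mul_inv]
      refine h1.congr_deriv ?_
      ring)
    (by
      refine ContinuousOn.add (ContinuousOn.mul continuousOn_const ?_) ?_
      · refine ContinuousOn.div (ContinuousOn.div continuousOn_const (by fun_prop) ?_) ?_ ?_
        · intro ζ hζ
          exact pow_ne_zero 2 (hAne ζ hζ)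
        · exact ContinuousOn.sub continuousOn_const
            (ContinuousOn.div continuousOn_const continuousOn_id hAne)
        · intro ζ hζ
          exact Complex.slitPlane_ne_zero (hslit ζ hζ)
      · refine ContinuousOn.mul continuousOn_id (ContinuousOn.div (by fun_prop) (by fun_prop) ?_)
        intro ζ hζ
        exact hQ ζ (hAball ζ hζ))
    (by
      intro x hx
      have h1 := hslit _ hx
      have h2 : |x| < r := by simpa using hAball _ hx
      have e : (1 : ℂ) - m0 / x = ((1 - m0 / x : ℝ) : ℂ) := by push_cast; ring
      rw [e] at h1
      have h3 : 0 < 1 - m0 / x := by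
        have := h1
        rwa [Complex.ofReal_mem_slitPlane] at this
      rw [Complex.add_im, hFim x h2, e, ← Complex.ofReal_log h3.le, Complex.im_ofReal_mul,
        Complex.ofReal_im]
      ring)
  rw [hμf _ (by fun_prop)]
  have heq : ∀ θ ∈ Set.Ioo 0 Real.pi,
      w θ * (1 / ((1 / m0 + a + B * m0 + c * m0 ^ 2) - X θ)) = (1 / Real.pi) * (m0 +
      ((m0 * ((m0 / mpath s θ ^ 2) / (1 - m0 / mpath s θ)) +
      mpath s θ * ((-(m0 * (B + c * m0)) - 2 * c * m0 * mpath s θ) /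
        (1 - m0 * (B + c * m0) * mpath s θ - c * m0 * mpath s θ ^ 2))) * mpathD s s' θ).im) := by
    intro θ hθ
    rw [← cauchy_identity a B c (Y θ) (X θ) m0 _ (mpath s θ) (mpathD s s' θ) _ (hmne θ) hm0 rfl
      (hqim θ) (hYm θ hθ).2 (hXm θ) rfl (Complex.slitPlane_ne_zero (hslit _ (hmA θ)))
      (hQ _ (hAball _ (hmA θ)))]
    rw [hwdef]
    simp only
    rw [← neg_sub (X θ), one_div (-(_)), inv_neg]
    ring
  have : ∫ θ in (0 : ℝ)..Real.pi, w θ * (1 / ((1 / m0 + a + B * m0 + c * m0 ^ 2) - X θ)) =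
      ∫ θ in (0 : ℝ)..Real.pi, (1 / Real.pi) * (m0 +
      ((m0 * ((m0 / mpath s θ ^ 2) / (1 - m0 / mpath s θ)) +
      mpath s θ * ((-(m0 * (B + c * m0)) - 2 * c * m0 * mpath s θ) /
        (1 - m0 * (B + c * m0) * mpath s θ - c * m0 * mpath s θ ^ 2))) * mpathD s s' θ).im) := by
    rw [intervalIntegral.integral_of_le hpi.le, intervalIntegral.integral_of_le hpi.le,
      integral_Ioc_eq_integral_Ioo, integral_Ioc_eq_integral_Ioo]
    exact setIntegral_congr_fun measurableSet_Ioo heq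
  rw [this, intervalIntegral.integral_const_mul,
    intervalIntegral.integral_add intervalIntegrable_const hcau.1, hcau.2]
  simp

/-- A cubic function `V(m) = 1 + a·m + b·m² + c·m³` is in `𝒱` iff `(b+1)³ ≥ 27c²`. -/
theorem cubic_in_V_iff (a b c : ℝ) :
    memV (fun m => 1 + a * m + b * m ^ 2 + c * m ^ 3) ↔ (b + 1) ^ 3 ≥ 27 * c ^ 2 := by
  constructor
  · exact necessity a b c
  · intro h
    have hB0 : 0 ≤ b + 1 := by
      by_contra hcon
      push Not at hcon
      have h1 : (b + 1) ^ 3 < 0 := Odd.pow_neg (by decide) hcon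
      nlinarith [sq_nonneg c]
    rcases hB0.eq_or_lt with hB | hB
    · have hc : c = 0 := by
        rw [← hB] at h
        have : c ^ 2 = 0 := by nlinarith [sq_nonneg c]
        exact pow_eq_zero_iff (by norm_num) |>.1 this
      refine memV_of_measure a b c (Measure.dirac a) |a| ?_ 1 one_pos ?_
      · rw [Measure.dirac_apply' _ measurableSet_Icc.compl]
        have : a ∈ Set.Icc (-|a|) |a| := abs_le.1 le_rfl
        simp [this.1, this.2]
      · intro m hm _
        rw [integral_dirac, hc, ← hB]
        field_simp
        simp
    · obtain ⟨μ, S, δ, hμ, hS, hδ, hG⟩ := exists_mu a (b + 1) c hB h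
      exact memV_of_measure a b c μ S hS δ hδ hG
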